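/- Let P be a normal logic program, X ∈ {E,A}, and χ ∈ {HP,EB,EH}. A Herbrand interpretation M is a stable model of P if and only if there exists a consistent stableˣ expansion T of τ_χ(P) such that M = T_oga. The same holds for τ⁻_HP and stableᴬ expansions. -/

import Mathlib

set_option autoImplicit false

/-! # First-order autoepistemic logic (FO-AEL): syntax -/

structure Sig : Type 1 where
  Func : Type
  Pred : Type
  arF : Func → ℕ
  arP : Pred → ℕ

inductive Term (S : Sig) : Type
  | var : ℕ → Term S
  | func : (f : S.Func) → (Fin (S.arF f) → Term S) → Term S

inductive Formula (S : Sig) : Type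
  | atom : (p : S.Pred) → (Fin (S.arP p) → Term S) → Formula S
  | eq : Term S → Term S → Formula S
  | not : Formula S → Formula S
  | and : Formula S → Formula S → Formula S
  | ex : ℕ → Formula S → Formula S
  | box : Formula S → Formula S

namespace Term

variable {S : Sig}

/-- A term is ground if it contains no variables; ground terms are the *names*. -/
def isGround : Term S → Prop
  | var _ => False
  | func _ ts => ∀ i, (ts i).isGround

def hasVar (x : ℕ) : Term S → Prop
  | var y => y = x
  | func _ ts => ∃ i, (ts i).hasVar x

/-- Application of a partial (name) substitution to a term. -/
def subst (β : ℕ → Option (Term S)) : Term S → Term S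
  | var x => (β x).getD (var x)
  | func f ts => func f (fun i => (ts i).subst β)

/-- The function symbols occurring in a term. -/
def funcs : Term S → Set S.Func
  | var _ => ∅
  | func f ts => insert f (⋃ i, (ts i).funcs)

/-- `t` is a name (ground term) over the set `F` of function symbols. -/
def isNameOf (F : Set S.Func) : Term S → Prop
  | var _ => False
  | func f ts => f ∈ F ∧ ∀ i, (ts i).isNameOf F

end Term

namespace Formula

variable {S : Sig}

/-- A formula is objective if it is 𝖫-free. -/
def isObjective : Formula S → Prop
  | atom _ _ => True
  | eq _ _ => True
  | not φ => φ.isObjective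
  | and φ ψ => φ.isObjective ∧ ψ.isObjective
  | ex _ φ => φ.isObjective
  | box _ => False

def isGround : Formula S → Prop
  | atom _ ts => ∀ i, (ts i).isGround
  | eq t₁ t₂ => t₁.isGround ∧ t₂.isGround
  | not φ => φ.isGround
  | and φ ψ => φ.isGround ∧ ψ.isGround
  | ex _ _ => False
  | box φ => φ.isGround

def isAtomic : Formula S → Prop
  | atom _ _ => True
  | eq _ _ => True
  | not _ => False
  | and _ _ => False
  | ex _ _ => False
  | box _ => False

/-- The modal operator 𝖫 occurs only applied to (objective) atomic formulas. -/
def boxAtomic : Formula S → Prop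
  | atom _ _ => True
  | eq _ _ => True
  | not φ => φ.boxAtomic
  | and φ ψ => φ.boxAtomic ∧ ψ.boxAtomic
  | ex _ φ => φ.boxAtomic
  | box φ => φ.isAtomic

/-- Propositional formulas: built from 0-ary predicates only. -/
def isPropositional : Formula S → Prop
  | atom p _ => S.arP p = 0
  | eq _ _ => False
  | not φ => φ.isPropositional
  | and φ ψ => φ.isPropositional ∧ ψ.isPropositional
  | ex _ _ => False
  | box _ => False

def freeIn (x : ℕ) : Formula S → Prop
  | atom _ ts => ∃ i, (ts i).hasVar x
  | eq t₁ t₂ => t₁.hasVar x ∨ t₂.hasVar x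
  | not φ => φ.freeIn x
  | and φ ψ => φ.freeIn x ∨ ψ.freeIn x
  | ex y φ => x ≠ y ∧ φ.freeIn x
  | box φ => φ.freeIn x

/-- A formula is closed (a sentence) if it has no free variables. -/
def closed (φ : Formula S) : Prop := ∀ x, ¬ φ.freeIn x

/-- Capture-avoiding application of a partial name substitution (values are ground). -/
def subst (β : ℕ → Option (Term S)) : Formula S → Formula S
  | atom p ts => atom p (fun i => (ts i).subst β)
  | eq t₁ t₂ => eq (t₁.subst β) (t₂.subst β)
  | not φ => not (φ.subst β)
  | and φ ψ => and (φ.subst β) (ψ.subst β)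
  | ex y φ => ex y (φ.subst (fun z => if z = y then none else β z))
  | box φ => box (φ.subst β)

def funcs : Formula S → Set S.Func
  | atom _ ts => ⋃ i, (ts i).funcs
  | eq t₁ t₂ => t₁.funcs ∪ t₂.funcs
  | not φ => φ.funcs
  | and φ ψ => φ.funcs ∪ ψ.funcs
  | ex _ φ => φ.funcs
  | box φ => φ.funcs

def preds : Formula S → Set S.Pred
  | atom p _ => {p}
  | eq _ _ => ∅
  | not φ => φ.preds
  | and φ ψ => φ.preds ∪ ψ.preds
  | ex _ φ => φ.preds
  | box φ => φ.preds

/-- `φ ∨ ψ` as an abbreviation: `¬(¬φ ∧ ¬ψ)`. -/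
def or (φ ψ : Formula S) : Formula S := not (and (not φ) (not ψ))

/-- `φ ⊃ ψ` as an abbreviation: `¬(φ ∧ ¬ψ)`. -/
def imp (φ ψ : Formula S) : Formula S := not (and φ (not ψ))

/-- `∀x.φ` as an abbreviation: `¬∃x.¬φ`. -/
def all (x : ℕ) (φ : Formula S) : Formula S := not (ex x (not φ))

end Formula

/-! ## Semantics -/

structure Interp (S : Sig) where
  U : Type
  nonempty : Nonempty U
  interpF : (f : S.Func) → (Fin (S.arF f) → U) → U
  interpP : (p : S.Pred) → (Fin (S.arP p) → U) → Prop

noncomputable def Interp.dflt {S : Sig} (w : Interp S) : w.U := Classical.choice w.nonempty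

def Term.eval {S : Sig} (w : Interp S) (B : ℕ → w.U) : Term S → w.U
  | Term.var x => B x
  | Term.func f ts => w.interpF f (fun i => (ts i).eval w B)

/-- Evaluation of a ground term (the assignment is irrelevant). -/
noncomputable def Term.evalG {S : Sig} (w : Interp S) (t : Term S) : w.U :=
  t.eval w (fun _ => w.dflt)

/-- An individual is named if some name (ground term) denotes it. -/
def IsNamed {S : Sig} (w : Interp S) (k : w.U) : Prop :=
  ∃ t : Term S, t.isGround ∧ Term.evalG w t = k

/-- A name substitution `β` is associated with the variable assignment `B`:
its domain is exactly the set of variables whose `B`-value is named, and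
it assigns to each such variable a name denoting its `B`-value. -/
def Assoc {S : Sig} (w : Interp S) (B : ℕ → w.U) (β : ℕ → Option (Term S)) : Prop :=
  ∀ x : ℕ,
    (IsNamed w (B x) → (β x).isSome) ∧
    (∀ t : Term S, β x = some t → t.isGround ∧ Term.evalG w t = B x)

/-- The two semantics: any-name (E) and all-name (A). -/
inductive Sem : Type
  | any
  | all

/-- Satisfaction of a formula in an autoepistemic interpretation `⟨w,Γ⟩`
under a variable assignment, for the any-name (E) resp. all-name (A) semantics. -/
def Sat {S : Sig} (X : Sem) (w : Interp S) (Γ : Set (Formula S)) :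
    Formula S → (ℕ → w.U) → Prop
  | Formula.atom p ts, B => w.interpP p (fun i => (ts i).eval w B)
  | Formula.eq t₁ t₂, B => t₁.eval w B = t₂.eval w B
  | Formula.not φ, B => ¬ Sat X w Γ φ B
  | Formula.and φ ψ, B => Sat X w Γ φ B ∧ Sat X w Γ ψ B
  | Formula.ex x φ, B => ∃ u : w.U, Sat X w Γ φ (Function.update B x u)
  | Formula.box φ, B =>
      match X with
      | Sem.any => ∃ β, Assoc w B β ∧ (φ.subst β).closed ∧ φ.subst β ∈ Γ
      | Sem.all => ∀ β, Assoc w B β → (φ.subst β).closed ∧ φ.subst β ∈ Γ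

def ModelsF {S : Sig} (X : Sem) (w : Interp S) (Γ : Set (Formula S)) (φ : Formula S) : Prop :=
  ∀ B : ℕ → w.U, Sat X w Γ φ B

def ModelsT {S : Sig} (X : Sem) (w : Interp S) (Γ Φ : Set (Formula S)) : Prop :=
  ∀ φ ∈ Φ, ModelsF X w Γ φ

/-- `Φ ⊨ˣ_Γ φ`. -/
def Entails {S : Sig} (X : Sem) (Φ Γ : Set (Formula S)) (φ : Formula S) : Prop :=
  ∀ w : Interp S, ModelsT X w Γ Φ → ModelsF X w Γ φ

/-- The standard names assumption: all names are interpreted distinctly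
and every individual is named. -/
def SNA {S : Sig} (w : Interp S) : Prop :=
  (∀ t₁ t₂ : Term S, t₁.isGround → t₂.isGround → Term.evalG w t₁ = Term.evalG w t₂ → t₁ = t₂) ∧
  (∀ k : w.U, IsNamed w k)

/-- Entailment restricted to interpretations satisfying the standard names assumption. -/
def EntailsSN {S : Sig} (X : Sem) (Φ Γ : Set (Formula S)) (φ : Formula S) : Prop :=
  ∀ w : Interp S, SNA w → ModelsT X w Γ Φ → ModelsF X w Γ φ

/-- `T` is a stableˣ expansion of `Φ`. -/
def StableExp {S : Sig} (X : Sem) (Φ T : Set (Formula S)) : Prop :=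
  T = {φ | Entails X Φ T φ}

def objOf {S : Sig} (T : Set (Formula S)) : Set (Formula S) :=
  {φ ∈ T | φ.isObjective}

def ogOf {S : Sig} (T : Set (Formula S)) : Set (Formula S) :=
  {φ ∈ T | φ.isObjective ∧ φ.isGround}

def ogaOf {S : Sig} (T : Set (Formula S)) : Set (Formula S) :=
  {φ ∈ T | φ.isObjective ∧ φ.isGround ∧ φ.isAtomic}

def Consistent {S : Sig} (T : Set (Formula S)) : Prop := T ≠ Set.univ

/-- `Φ₁ ≡ˣ Φ₂`: same stableˣ expansions. -/
def ExpEquiv {S : Sig} (X : Sem) (Φ₁ Φ₂ : Set (Formula S)) : Prop :=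
  ∀ T, StableExp X Φ₁ T ↔ StableExp X Φ₂ T

/-- `Φ₁ ≡ˣ_γ Φ₂` for a selector `sel` (e.g. `ogaOf`): the stableˣ expansions
correspond with respect to `sel`. -/
def ExpEquivSel {S : Sig} (X : Sem) (sel : Set (Formula S) → Set (Formula S))
    (Φ₁ Φ₂ : Set (Formula S)) : Prop :=
  (∀ T, StableExp X Φ₁ T → ∃ T', StableExp X Φ₂ T' ∧ sel T = sel T') ∧
  (∀ T', StableExp X Φ₂ T' → ∃ T, StableExp X Φ₁ T ∧ sel T = sel T')

/-- Autoepistemicˣ consequences of `Φ`. -/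
def Cn {S : Sig} (X : Sem) (Φ : Set (Formula S)) : Set (Formula S) :=
  {φ | ∀ T, StableExp X Φ T → φ ∈ T}

def CnO {S : Sig} (X : Sem) (Φ : Set (Formula S)) : Set (Formula S) :=
  {φ ∈ Cn X Φ | φ.isObjective}

def CnOg {S : Sig} (X : Sem) (Φ : Set (Formula S)) : Set (Formula S) :=
  {φ ∈ Cn X Φ | φ.isObjective ∧ φ.isGround}

/-! ## Logic programs -/

structure PAtom (S : Sig) where
  p : S.Pred
  args : Fin (S.arP p) → Term S

namespace PAtom

variable {S : Sig}

def toFormula (a : PAtom S) : Formula S := Formula.atom a.p a.args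

def isGround (a : PAtom S) : Prop := ∀ i, (a.args i).isGround

def hasVar (x : ℕ) (a : PAtom S) : Prop := ∃ i, (a.args i).hasVar x

def substA (σ : ℕ → Term S) (a : PAtom S) : PAtom S :=
  ⟨a.p, fun i => (a.args i).subst (fun x => some (σ x))⟩

def funcs (a : PAtom S) : Set S.Func := ⋃ i, (a.args i).funcs

end PAtom

/-- A (disjunctive) rule `h₁ | … | h_l ← b₁,…,b_m, not c₁,…,not c_n`,
together with a list of the variables occurring in it. -/
structure Rule (S : Sig) where
  head : List (PAtom S)
  pos : List (PAtom S)
  neg : List (PAtom S)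
  vars : List ℕ

namespace Rule

variable {S : Sig}

def atoms (r : Rule S) : List (PAtom S) := r.head ++ r.pos ++ r.neg

def hasVar (x : ℕ) (r : Rule S) : Prop := ∃ a ∈ r.atoms, PAtom.hasVar x a

/-- Well-formedness: at least one head atom, and `vars` lists all variables of the rule. -/
def wf (r : Rule S) : Prop := r.head ≠ [] ∧ ∀ x, r.hasVar x → x ∈ r.vars

def isNormal (r : Rule S) : Prop := r.head.length = 1

def isGround (r : Rule S) : Prop := (∀ a ∈ r.atoms, a.isGround) ∧ r.vars = []

def isSafe (r : Rule S) : Prop := ∀ x, r.hasVar x → ∃ a ∈ r.pos, PAtom.hasVar x a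

def isPositive (r : Rule S) : Prop := r.neg = []

def applySubst (σ : ℕ → Term S) (r : Rule S) : Rule S :=
  ⟨r.head.map (PAtom.substA σ), r.pos.map (PAtom.substA σ), r.neg.map (PAtom.substA σ), []⟩

end Rule

abbrev Program (S : Sig) := Set (Rule S)

def progWf {S : Sig} (P : Program S) : Prop := ∀ r ∈ P, r.wf
def progNormal {S : Sig} (P : Program S) : Prop := ∀ r ∈ P, r.isNormal
def progGround {S : Sig} (P : Program S) : Prop := ∀ r ∈ P, r.isGround
def progSafe {S : Sig} (P : Program S) : Prop := ∀ r ∈ P, r.isSafe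
def progPositive {S : Sig} (P : Program S) : Prop := ∀ r ∈ P, r.isPositive

/-- The function symbols occurring in `P` (part of the signature `Σ_P`). -/
def progFuncs {S : Sig} (P : Program S) : Set S.Func :=
  {f | ∃ r ∈ P, ∃ a ∈ r.atoms, f ∈ a.funcs}

/-- The predicate symbols occurring in `P` (part of the signature `Σ_P`). -/
def progPreds {S : Sig} (P : Program S) : Set S.Pred :=
  {q | ∃ r ∈ P, ∃ a ∈ r.atoms, a.p = q}

/-- The ambient signature is exactly the signature `Σ_P` of `P`. -/
def fullSig {S : Sig} (P : Program S) : Prop :=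
  (∀ f : S.Func, f ∈ progFuncs P) ∧ (∀ q : S.Pred, q ∈ progPreds P)

/-- Standing assumption: `Σ_P` contains a 0-ary function symbol whenever it
has a predicate symbol of arity greater than 0. -/
def goodSig {S : Sig} (P : Program S) : Prop :=
  (∃ q ∈ progPreds P, 0 < S.arP q) → ∃ f ∈ progFuncs P, S.arF f = 0

/-! ## Embeddings of logic programs into FO-AEL -/

def andAll {S : Sig} : Formula S → List (Formula S) → Formula S
  | φ, [] => φ
  | φ, ψ :: rest => andAll (Formula.and φ ψ) rest

def orAll {S : Sig} : Formula S → List (Formula S) → Formula S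
  | φ, [] => φ
  | φ, ψ :: rest => orAll (Formula.or φ ψ) rest

/-- `impOf ants c` is `⋀ ants ⊃ c` (just `c` if there are no antecedents). -/
def impOf {S : Sig} : List (Formula S) → Formula S → Formula S
  | [], c => c
  | a :: rest, c => Formula.imp (andAll a rest) c

/-- Disjunction of a nonempty list (junk value on the empty list,
which is excluded by rule well-formedness). -/
def disjOf {S : Sig} : List (Formula S) → Formula S
  | [] => Formula.eq (Term.var 0) (Term.var 0)
  | h :: rest => orAll h rest

/-- Universal uclosure over the listed variables. -/
def uclosure {S : Sig} (vs : List ℕ) (φ : Formula S) : Formula S :=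
  vs.foldr Formula.all φ

def bodyHP {S : Sig} (r : Rule S) : List (Formula S) :=
  r.pos.map PAtom.toFormula ++ r.neg.map (fun c => Formula.not (Formula.box c.toFormula))

def bodyE {S : Sig} (r : Rule S) : List (Formula S) :=
  r.pos.map (fun b => Formula.and b.toFormula (Formula.box b.toFormula)) ++
    r.neg.map (fun c => Formula.not (Formula.box c.toFormula))

/-- `τ_HP(r)` resp. `τ^∨_HP(r)`. -/
def embHP {S : Sig} (r : Rule S) : Formula S :=
  uclosure r.vars (impOf (bodyHP r) (disjOf (r.head.map PAtom.toFormula)))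

/-- `τ_EB(r)` resp. `τ^∨_EB(r)`. -/
def embEB {S : Sig} (r : Rule S) : Formula S :=
  uclosure r.vars (impOf (bodyE r) (disjOf (r.head.map PAtom.toFormula)))

/-- `τ_EH(r)` resp. `τ^∨_EH(r)`. -/
def embEH {S : Sig} (r : Rule S) : Formula S :=
  uclosure r.vars (impOf (bodyE r)
    (disjOf (r.head.map (fun h => Formula.and h.toFormula (Formula.box h.toFormula)))))

/-- The unique-names axioms `¬𝖫(t₁=t₂) ⊃ t₁≠t₂` for distinct names of `Σ_P`. -/
def UNAax {S : Sig} (P : Program S) : Set (Formula S) :=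
  {φ | ∃ t₁ t₂ : Term S, t₁.isNameOf (progFuncs P) ∧ t₂.isNameOf (progFuncs P) ∧ t₁ ≠ t₂ ∧
        φ = Formula.imp (Formula.not (Formula.box (Formula.eq t₁ t₂)))
              (Formula.not (Formula.eq t₁ t₂))}

/-- The positive introspection axioms `α ⊃ 𝖫α` for objective ground atoms of `Σ_P`. -/
def PIAax {S : Sig} (P : Program S) : Set (Formula S) :=
  {φ | ∃ a : PAtom S, a.p ∈ progPreds P ∧ (∀ i, (a.args i).isNameOf (progFuncs P)) ∧
        φ = Formula.imp a.toFormula (Formula.box a.toFormula)}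

def ruleEmb {S : Sig} (emb : Rule S → Formula S) (P : Program S) : Set (Formula S) :=
  {φ | ∃ r ∈ P, φ = emb r}

def tauHP {S : Sig} (P : Program S) : Set (Formula S) := ruleEmb embHP P ∪ UNAax P
def tauEB {S : Sig} (P : Program S) : Set (Formula S) := ruleEmb embEB P ∪ UNAax P
def tauEH {S : Sig} (P : Program S) : Set (Formula S) := ruleEmb embEH P ∪ UNAax P
def tauHPv {S : Sig} (P : Program S) : Set (Formula S) := ruleEmb embHP P ∪ PIAax P ∪ UNAax P
def tauEBv {S : Sig} (P : Program S) : Set (Formula S) := ruleEmb embEB P ∪ PIAax P ∪ UNAax P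
def tauEHv {S : Sig} (P : Program S) : Set (Formula S) := ruleEmb embEH P ∪ UNAax P
def tauHPminus {S : Sig} (P : Program S) : Set (Formula S) := ruleEmb embHP P
def tauEHvminus {S : Sig} (P : Program S) : Set (Formula S) := ruleEmb embEH P

/-! ## Grounding and stable models -/

/-- The grounding of `P`: all ground instantiations of rules of `P`
obtained by replacing variables with names of `Σ_P`. -/
def grP {S : Sig} (P : Program S) : Program S :=
  {r' | ∃ r ∈ P, ∃ σ : ℕ → Term S,
        (∀ x, r.hasVar x → (σ x).isNameOf (progFuncs P)) ∧ r' = Rule.applySubst σ r}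

/-- A Herbrand interpretation: a set of ground atomic formulas. -/
def HerbrandI {S : Sig} (M : Set (Formula S)) : Prop :=
  ∀ φ ∈ M, φ.isAtomic ∧ φ.isGround

/-- `M` is a Herbrand model of the positive ground program `Q` (relative to the
names of `Σ_P`): rules are satisfied and `t = t ∈ M` for every name `t`. -/
def HerbrandModelOf {S : Sig} (P Q : Program S) (M : Set (Formula S)) : Prop :=
  HerbrandI M ∧
  (∀ r ∈ Q, (∀ b ∈ r.pos, PAtom.toFormula b ∈ M) → ∃ h ∈ r.head, PAtom.toFormula h ∈ M) ∧
  (∀ t : Term S, t.isNameOf (progFuncs P) → Formula.eq t t ∈ M)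

/-- The Gelfond–Lifschitz reduct of `gr(P)` with respect to `M`. -/
def reduct {S : Sig} (P : Program S) (M : Set (Formula S)) : Program S :=
  {r' | ∃ r ∈ grP P, (∀ c ∈ r.neg, PAtom.toFormula c ∉ M) ∧
        r' = ⟨r.head, r.pos, [], r.vars⟩}

/-- `M` is a stable model of `P`: a minimal Herbrand model of the reduct of `gr(P)` w.r.t. `M`. -/
def isStableModel {S : Sig} (P : Program S) (M : Set (Formula S)) : Prop :=
  HerbrandModelOf P (reduct P M) M ∧
  ∀ M', M' ⊆ M → HerbrandModelOf P (reduct P M) M' → M' = M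

/-! ## First-order theories and classes thereof -/

/-- An FO theory: a set of objective sentences. -/
def FOTheory {S : Sig} (Φ : Set (Formula S)) : Prop :=
  ∀ φ ∈ Φ, φ.isObjective ∧ φ.closed

def theoryFuncs {S : Sig} (Φ : Set (Formula S)) : Set S.Func := {f | ∃ φ ∈ Φ, f ∈ φ.funcs}
def theoryPreds {S : Sig} (Φ : Set (Formula S)) : Set S.Pred := {q | ∃ φ ∈ Φ, q ∈ φ.preds}

/-- The ambient signature is exactly the union of the signatures of `Φ` and `P`. -/
def CoverSig {S : Sig} (Φ : Set (Formula S)) (P : Program S) : Prop :=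
  (∀ f : S.Func, f ∈ theoryFuncs Φ ∪ progFuncs P) ∧
  (∀ q : S.Pred, q ∈ theoryPreds Φ ∪ progPreds P)

def exClosure {S : Sig} (ys : List ℕ) (φ : Formula S) : Formula S := ys.foldr Formula.ex φ

/-- A Horn sentence `(∀)(b₁ ∧ … ∧ b_n ⊃ h)` with atomic `b_i`, `h`
(the consequent `h` may be absent). -/
def isHornSentence {S : Sig} (φ : Formula S) : Prop :=
  ∃ (vs : List ℕ) (bs : List (Formula S)),
    (∀ b ∈ bs, b.isAtomic) ∧
    ((∃ h : Formula S, h.isAtomic ∧ φ = uclosure vs (impOf bs h)) ∨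
     (∃ b rest, bs = b :: rest ∧ φ = uclosure vs (Formula.not (andAll b rest))))

def HornTheory {S : Sig} (Φ : Set (Formula S)) : Prop :=
  FOTheory Φ ∧ ∀ φ ∈ Φ, isHornSentence φ

/-- A generalized Horn sentence `(∀)(b₁ ∧ … ∧ b_n ⊃ ∃ȳ.h)` with atomic `b_i`, `h`,
the variables `ȳ` occurring only in `h` (the consequent may be absent). -/
def isGHornSentence {S : Sig} (φ : Formula S) : Prop :=
  ∃ (vs : List ℕ) (bs : List (Formula S)),
    (∀ b ∈ bs, b.isAtomic) ∧
    ((∃ (ys : List ℕ) (h : Formula S), h.isAtomic ∧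
        (∀ y ∈ ys, ∀ b ∈ bs, ¬ b.freeIn y) ∧
        φ = uclosure vs (impOf bs (exClosure ys h))) ∨
     (∃ b rest, bs = b :: rest ∧ φ = uclosure vs (Formula.not (andAll b rest))))

def GHornTheory {S : Sig} (Φ : Set (Formula S)) : Prop :=
  FOTheory Φ ∧ ∀ φ ∈ Φ, isGHornSentence φ

def PropTheory {S : Sig} (Φ : Set (Formula S)) : Prop :=
  FOTheory Φ ∧ ∀ φ ∈ Φ, φ.isPropositional

/-!
A stable expansion `T` is determined by which boxed formulas it contains. When `𝖫` is applied
only to atoms, `T` is therefore determined by its ground atoms `M = T_oga`, and every `M` that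
equals the set of ground atoms entailed relative to `M` itself extends to an expansion, by
recursion on the modal depth.

For such an `M`, negative body literals `¬𝖫c` evaluate to `c ∉ M`, so that an interpretation
satisfies the embedding relative to `M` iff it satisfies the Gelfond–Lifschitz reduct, up to two
points: the reduct only speaks about named individuals, and a boxed atom may depend on the name
chosen for an individual. Term interpretations remove the first obstacle, the unique-names axioms
(or the all-name reading of `¬𝖫c`) the second. Among the three rule embeddings `τ_EB` is the
weakest, and all three agree on interpretations whose true ground atoms belong to `M`.
-/

variable {S : Sig}

/-! ### Substitution and evaluation -/

theorem Term.isGround_iff_forall_not_hasVar {t : Term S} : t.isGround ↔ ∀ x, ¬ t.hasVar x := by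
  induction t with
  | var y => simp [isGround, hasVar]
  | func f ts ih =>
    simp only [isGround, hasVar, ih, not_exists]
    exact forall_comm

theorem Term.isNameOf_iff_isGround {F : Set S.Func} (hF : ∀ f, f ∈ F) {t : Term S} :
    t.isNameOf F ↔ t.isGround := by
  induction t with
  | var x => rfl
  | func f ts ih => simp only [isNameOf, isGround, hF, ih, true_and]

theorem Term.isGround_of_isNameOf {F : Set S.Func} {t : Term S} (h : t.isNameOf F) :
    t.isGround := by
  induction t with
  | var x => exact h
  | func f ts ih => exact fun i => ih i (h.2 i)

theorem Term.subst_congr {β β' : ℕ → Option (Term S)} {t : Term S}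
    (h : ∀ x, t.hasVar x → β x = β' x) : t.subst β = t.subst β' := by
  induction t with
  | var x => simp only [subst, h x rfl]
  | func f ts ih =>
    simp only [subst, func.injEq, heq_eq_eq, true_and]
    exact funext fun i => ih i fun x hx => h x ⟨i, hx⟩

theorem Term.subst_none (t : Term S) : t.subst (fun _ => none) = t := by
  induction t with
  | var x => rfl
  | func f ts ih => simp only [subst, ih]

theorem Term.eval_eq_evalG {t : Term S} (ht : t.isGround) (w : Interp S) (B : ℕ → w.U) :
    t.eval w B = t.evalG w := by
  induction t with
  | var x => exact ht.elim
  | func f ts ih => exact congrArg (w.interpF f) (funext fun i => ih i (ht i))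

theorem Formula.subst_congr {φ : Formula S} {β β' : ℕ → Option (Term S)}
    (h : ∀ x, φ.freeIn x → β x = β' x) : φ.subst β = φ.subst β' := by
  induction φ generalizing β β' with
  | atom p ts =>
    exact congrArg (atom p) (funext fun i => Term.subst_congr fun x hx => h x ⟨i, hx⟩)
  | eq t₁ t₂ =>
    exact congrArg₂ eq (Term.subst_congr fun x hx => h x (.inl hx))
      (Term.subst_congr fun x hx => h x (.inr hx))
  | not φ ih => exact congrArg not (ih h)
  | and φ ψ ihφ ihψ =>
    exact congrArg₂ and (ihφ fun x hx => h x (.inl hx)) (ihψ fun x hx => h x (.inr hx))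
  | ex y φ ih =>
    refine congrArg (ex y) (ih fun x hx => ?_)
    split_ifs with hxy
    · rfl
    · exact h x ⟨hxy, hx⟩
  | box φ ih => exact congrArg box (ih h)

theorem Formula.subst_none (φ : Formula S) : φ.subst (fun _ => none) = φ := by
  induction φ with
  | ex y φ ih => simpa only [subst, ite_self, ex.injEq, true_and] using ih
  | _ => simp only [subst, Term.subst_none, *]

theorem Formula.closed.subst_eq_self {φ : Formula S} (hφ : φ.closed)
    (β : ℕ → Option (Term S)) : φ.subst β = φ :=
  (subst_congr fun x hx => (hφ x hx).elim).trans φ.subst_none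

theorem Formula.isAtomic.isObjective {φ : Formula S} (h : φ.isAtomic) : φ.isObjective := by
  cases φ <;> trivial

theorem Formula.isAtomic.subst {φ : Formula S} (h : φ.isAtomic) (β : ℕ → Option (Term S)) :
    (φ.subst β).isAtomic := by
  cases φ <;> trivial

theorem Formula.isAtomic.isGround_iff_closed {φ : Formula S} (h : φ.isAtomic) :
    φ.isGround ↔ φ.closed := by
  cases φ with
  | atom p ts =>
    simp only [isGround, closed, freeIn, Term.isGround_iff_forall_not_hasVar, not_exists]
    exact forall_comm
  | eq t₁ t₂ =>
    simp only [isGround, closed, freeIn, Term.isGround_iff_forall_not_hasVar, not_or,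
      forall_and]
  | _ => exact h.elim

/-! ### Dependence of satisfaction on the belief set -/

/-- The formulas `ψ` such that `𝖫ψ` occurs in `φ` outside the scope of any other `𝖫`; these are
the formulas about which the belief set is consulted when `φ` is evaluated. -/
def Formula.boxed : Formula S → Set (Formula S)
  | atom _ _ => ∅
  | eq _ _ => ∅
  | not φ => φ.boxed
  | and φ ψ => φ.boxed ∪ ψ.boxed
  | ex _ φ => φ.boxed
  | box φ => {φ}

/-- The nesting depth of `𝖫`, on which expansions are built by recursion. -/
def Formula.modalDepth : Formula S → ℕ
  | atom _ _ => 0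
  | eq _ _ => 0
  | not φ => φ.modalDepth
  | and φ ψ => max φ.modalDepth ψ.modalDepth
  | ex _ φ => φ.modalDepth
  | box φ => φ.modalDepth + 1

theorem Formula.modalDepth_subst (φ : Formula S) (β : ℕ → Option (Term S)) :
    (φ.subst β).modalDepth = φ.modalDepth := by
  induction φ generalizing β <;> simp only [subst, modalDepth, *]

theorem Formula.modalDepth_lt_of_mem_boxed {φ ψ : Formula S} (h : ψ ∈ φ.boxed) :
    ψ.modalDepth < φ.modalDepth := by
  induction φ with
  | atom p ts => exact h.elim
  | eq t₁ t₂ => exact h.elim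
  | not φ ih => exact ih h
  | and φ₁ φ₂ ih₁ ih₂ => exact lt_max_iff.2 (h.imp ih₁ ih₂)
  | ex x φ ih => exact ih h
  | box φ => exact h ▸ Nat.lt_succ_self _

theorem Formula.isAtomic_of_mem_boxed {φ ψ : Formula S} (hφ : φ.boxAtomic) (h : ψ ∈ φ.boxed) :
    ψ.isAtomic := by
  induction φ with
  | atom p ts => exact h.elim
  | eq t₁ t₂ => exact h.elim
  | not φ ih => exact ih hφ h
  | and φ₁ φ₂ ih₁ ih₂ => exact h.elim (ih₁ hφ.1) (ih₂ hφ.2)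
  | ex x φ ih => exact ih hφ h
  | box φ => exact h ▸ hφ

theorem Formula.isAtomic.boxAtomic {φ : Formula S} (h : φ.isAtomic) : φ.boxAtomic := by
  cases φ <;> trivial

theorem sat_congr {X : Sem} {w : Interp S} {Γ Γ' : Set (Formula S)} {φ : Formula S}
    (h : ∀ ψ ∈ φ.boxed, ∀ β, (ψ.subst β).closed → (ψ.subst β ∈ Γ ↔ ψ.subst β ∈ Γ'))
    (B : ℕ → w.U) : Sat X w Γ φ B ↔ Sat X w Γ' φ B := by
  induction φ generalizing B with
  | atom p ts => rfl
  | eq t₁ t₂ => rfl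
  | not φ ih => exact not_congr (ih h B)
  | and φ ψ ihφ ihψ =>
    exact and_congr (ihφ (fun χ hχ => h χ (.inl hχ)) B) (ihψ (fun χ hχ => h χ (.inr hχ)) B)
  | ex x φ ih => exact exists_congr fun u => ih h _
  | box φ =>
    have hmem : ∀ β, (φ.subst β).closed ∧ φ.subst β ∈ Γ ↔ (φ.subst β).closed ∧ φ.subst β ∈ Γ' :=
      fun β => and_congr_right (h φ rfl β)
    cases X <;> simp only [Sat, hmem]

theorem modelsF_congr {X : Sem} {w : Interp S} {Γ Γ' : Set (Formula S)} {φ : Formula S}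
    (h : ∀ ψ ∈ φ.boxed, ∀ β, (ψ.subst β).closed → (ψ.subst β ∈ Γ ↔ ψ.subst β ∈ Γ')) :
    ModelsF X w Γ φ ↔ ModelsF X w Γ' φ :=
  forall_congr' (sat_congr h)

/-- Membership in the theory of a class `W` of interpretations that evaluates `𝖫` by membership
in the theory itself. Cutting the belief set down to smaller modal depth makes the recursion
well founded; by `introspectivelyValid_iff` the cut has no effect. -/
def IntrospectivelyValid (X : Sem) (W : Interp S → Prop) (φ : Formula S) : Prop :=
  ∀ w, W w →
    ModelsF X w {ψ | ∃ _ : ψ.modalDepth < φ.modalDepth, IntrospectivelyValid X W ψ} φ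
termination_by φ.modalDepth

theorem introspectivelyValid_iff {X : Sem} {W : Interp S → Prop} {φ : Formula S} :
    IntrospectivelyValid X W φ ↔
      ∀ w, W w → ModelsF X w {ψ | IntrospectivelyValid X W ψ} φ := by
  rw [IntrospectivelyValid]
  refine forall₂_congr fun w _ => modelsF_congr fun ψ hψ β _ => ?_
  have hdepth : (ψ.subst β).modalDepth < φ.modalDepth :=
    (ψ.modalDepth_subst β).trans_lt (Formula.modalDepth_lt_of_mem_boxed hψ)
  simp only [Set.mem_ofPred_eq, hdepth, exists_const]

/-- Belief sets with the same ground atoms; these cannot be told apart by theories in which `𝖫`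
is applied to atoms only. -/
def AgreeOnGroundAtoms (Γ Γ' : Set (Formula S)) : Prop :=
  ∀ φ : Formula S, φ.isAtomic → φ.isGround → (φ ∈ Γ ↔ φ ∈ Γ')

theorem agreeOnGroundAtoms_ogaOf (T : Set (Formula S)) : AgreeOnGroundAtoms T (ogaOf T) :=
  fun _ hat hgr => ⟨fun h => ⟨h, hat.isObjective, hgr, hat⟩, fun h => h.1⟩

section AgreeOnGroundAtoms

variable {X : Sem} {w : Interp S} {Γ Γ' Φ : Set (Formula S)} {φ : Formula S}

theorem AgreeOnGroundAtoms.modelsF_iff (h : AgreeOnGroundAtoms Γ Γ') (hφ : φ.boxAtomic) :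
    ModelsF X w Γ φ ↔ ModelsF X w Γ' φ :=
  modelsF_congr fun _ hψ β hclosed =>
    have hat := (Formula.isAtomic_of_mem_boxed hφ hψ).subst β
    h _ hat (hat.isGround_iff_closed.2 hclosed)

theorem AgreeOnGroundAtoms.modelsT_iff (h : AgreeOnGroundAtoms Γ Γ')
    (hΦ : ∀ φ ∈ Φ, φ.boxAtomic) : ModelsT X w Γ Φ ↔ ModelsT X w Γ' Φ :=
  forall₂_congr fun φ hφ => h.modelsF_iff (hΦ φ hφ)

theorem AgreeOnGroundAtoms.entails_iff (h : AgreeOnGroundAtoms Γ Γ')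
    (hΦ : ∀ φ ∈ Φ, φ.boxAtomic) (hφ : φ.boxAtomic) :
    Entails X Φ Γ φ ↔ Entails X Φ Γ' φ :=
  forall_congr' fun _ => imp_congr (h.modelsT_iff hΦ) (h.modelsF_iff hφ)

theorem modelsF_congr_of_isAtomic (hφ : φ.isAtomic) :
    ModelsF X w Γ φ ↔ ModelsF X w Γ' φ := by
  cases φ <;> first | rfl | exact hφ.elim

end AgreeOnGroundAtoms

/-! ### Expansions and their ground atoms -/

/-- The fixed-point condition on sets of ground atoms that characterises the sets `T_oga` for
consistent stable expansions `T`; see `exists_stableExp_iff_isAtomicExpansion`. -/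
def IsAtomicExpansion (X : Sem) (Φ M : Set (Formula S)) : Prop :=
  (∃ w, ModelsT X w M Φ) ∧ M = {φ | φ.isAtomic ∧ φ.isGround ∧ Entails X Φ M φ}

section Expansion

variable {X : Sem} {Φ M T : Set (Formula S)}

theorem IsAtomicExpansion.mem_iff (h : IsAtomicExpansion X Φ M) {φ : Formula S}
    (hat : φ.isAtomic) (hgr : φ.isGround) : φ ∈ M ↔ Entails X Φ M φ := by
  conv_lhs => rw [h.2]
  simp only [Set.mem_ofPred_eq, hat, hgr, true_and]

theorem isAtomicExpansion_ogaOf (hΦ : ∀ φ ∈ Φ, φ.boxAtomic) (hT : StableExp X Φ T)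
    (hcons : Consistent T) : IsAtomicExpansion X Φ (ogaOf T) := by
  have hagree := agreeOnGroundAtoms_ogaOf T
  have hmem : ∀ φ, φ ∈ T ↔ Entails X Φ T φ := Set.ext_iff.1 hT
  constructor
  · by_contra! hno
    refine hcons (Set.eq_univ_of_forall fun φ => (hmem φ).2 fun w hw => ?_)
    exact (hno w ((hagree.modelsT_iff hΦ).1 hw)).elim
  · ext φ
    constructor
    · rintro ⟨hφ, -, hgr, hat⟩
      exact ⟨hat, hgr, (hagree.entails_iff hΦ hat.boxAtomic).1 ((hmem φ).1 hφ)⟩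
    · rintro ⟨hat, hgr, hφ⟩
      exact ⟨(hmem φ).2 ((hagree.entails_iff hΦ hat.boxAtomic).2 hφ), hat.isObjective, hgr, hat⟩

theorem IsAtomicExpansion.exists_stableExp (hΦ : ∀ φ ∈ Φ, φ.boxAtomic)
    (h : IsAtomicExpansion X Φ M) : ∃ T, StableExp X Φ T ∧ Consistent T ∧ M = ogaOf T := by
  set T : Set (Formula S) := {φ | IntrospectivelyValid X (fun w => ModelsT X w M Φ) φ}
  have hmem : ∀ φ, φ ∈ T ↔ ∀ w, ModelsT X w M Φ → ModelsF X w T φ :=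
    fun φ => introspectivelyValid_iff
  have hagree : AgreeOnGroundAtoms T M := fun φ hat hgr => by
    rw [hmem, h.mem_iff hat hgr]
    exact forall₂_congr fun w _ => modelsF_congr_of_isAtomic hat
  refine ⟨T, ?_, ?_, ?_⟩
  · ext φ
    rw [hmem]
    exact forall_congr' fun w => imp_congr_left (hagree.modelsT_iff hΦ).symm
  · intro huniv
    obtain ⟨w, hw⟩ := h.1
    have hfalse : Formula.not (.eq (.var 0) (.var 0)) ∈ T := huniv ▸ Set.mem_univ _
    exact (hmem _).1 hfalse w hw (fun _ => w.dflt) rfl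
  · ext φ
    constructor
    · intro hφ
      obtain ⟨hat, hgr, -⟩ := h.2 ▸ hφ
      exact ⟨(hagree φ hat hgr).2 hφ, hat.isObjective, hgr, hat⟩
    · rintro ⟨hφ, -, hgr, hat⟩
      exact (hagree φ hat hgr).1 hφ

theorem exists_stableExp_iff_isAtomicExpansion (hΦ : ∀ φ ∈ Φ, φ.boxAtomic) :
    (∃ T, StableExp X Φ T ∧ Consistent T ∧ M = ogaOf T) ↔ IsAtomicExpansion X Φ M := by
  constructor
  · rintro ⟨T, hT, hcons, rfl⟩
    exact isAtomicExpansion_ogaOf hΦ hT hcons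
  · exact IsAtomicExpansion.exists_stableExp hΦ

end Expansion

/-! ### Boxed atoms and names -/

/-- `β` replaces every free variable of `φ` by a name of its value under `B`. Unlike `Assoc`,
this leaves `β` arbitrary at all other variables. -/
def NamesFreeVars (w : Interp S) (B : ℕ → w.U) (β : ℕ → Option (Term S)) (φ : Formula S) :
    Prop :=
  ∀ x, φ.freeIn x → ∃ t, β x = some t ∧ t.isGround ∧ t.evalG w = B x

/-- The ground atoms in `M` do not depend on the names chosen for individuals of `w`. -/
def NameInvariant (w : Interp S) (M : Set (Formula S)) : Prop :=
  ∀ (p : S.Pred) (ts ts' : Fin (S.arP p) → Term S), (∀ i, (ts i).isGround) →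
    (∀ i, (ts' i).isGround) → (∀ i, (ts i).evalG w = (ts' i).evalG w) →
    Formula.atom p ts ∈ M → Formula.atom p ts' ∈ M

section Names

variable {X : Sem} {w : Interp S} {B : ℕ → w.U} {β β' : ℕ → Option (Term S)}
  {M : Set (Formula S)}

theorem Term.isGround_subst {t : Term S}
    (h : ∀ x, t.hasVar x → ∃ s, β x = some s ∧ s.isGround) : (t.subst β).isGround := by
  induction t with
  | var x =>
    obtain ⟨s, hβ, hs⟩ := h x rfl
    simpa only [subst, hβ, Option.getD_some] using hs
  | func f ts ih => exact fun i => ih i fun x hx => h x ⟨i, hx⟩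

theorem Term.eval_subst {B' : ℕ → w.U} {t : Term S}
    (h : ∀ x, t.hasVar x → ∃ s, β x = some s ∧ s.eval w B' = B x) :
    (t.subst β).eval w B' = t.eval w B := by
  induction t with
  | var x =>
    obtain ⟨s, hβ, hs⟩ := h x rfl
    change ((β x).getD (var x)).eval w B' = B x
    rw [hβ]
    exact hs
  | func f ts ih =>
    exact congrArg (w.interpF f) (funext fun i => ih i fun x hx => h x ⟨i, hx⟩)

theorem NamesFreeVars.isGround_subst {a : PAtom S} (h : NamesFreeVars w B β a.toFormula)
    (i : Fin (S.arP a.p)) : ((a.args i).subst β).isGround :=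
  Term.isGround_subst fun x hx =>
    let ⟨t, hβ, ht, _⟩ := h x ⟨i, hx⟩
    ⟨t, hβ, ht⟩

theorem NamesFreeVars.evalG_subst {a : PAtom S} (h : NamesFreeVars w B β a.toFormula)
    (i : Fin (S.arP a.p)) : ((a.args i).subst β).evalG w = (a.args i).eval w B :=
  Term.eval_subst fun x hx =>
    let ⟨t, hβ, _, ht⟩ := h x ⟨i, hx⟩
    ⟨t, hβ, ht⟩

theorem NamesFreeVars.closed_subst {a : PAtom S} (h : NamesFreeVars w B β a.toFormula) :
    (a.toFormula.subst β).closed :=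
  (Formula.isAtomic.isGround_iff_closed (φ := a.toFormula.subst β) trivial).1 h.isGround_subst

theorem NamesFreeVars.of_assoc {φ : Formula S} (h : NamesFreeVars w B β φ)
    (hβ' : Assoc w B β') : NamesFreeVars w B β' φ := by
  intro x hx
  obtain ⟨t, -, ht⟩ := h x hx
  obtain ⟨s, hs⟩ := Option.isSome_iff_exists.1 ((hβ' x).1 ⟨t, ht⟩)
  exact ⟨s, hs, (hβ' x).2 s hs⟩

theorem NamesFreeVars.exists_assoc {φ : Formula S} (h : NamesFreeVars w B β φ) :
    ∃ β', Assoc w B β' ∧ φ.subst β' = φ.subst β := by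
  have hpointwise : ∀ x, ∃ o : Option (Term S),
      ((IsNamed w (B x) → o.isSome) ∧ ∀ t, o = some t → t.isGround ∧ t.evalG w = B x) ∧
        (φ.freeIn x → o = β x) := by
    intro x
    by_cases hx : φ.freeIn x
    · obtain ⟨t, hβ, ht⟩ := h x hx
      exact ⟨some t, ⟨fun _ => rfl, fun s hs => Option.some.inj hs ▸ ht⟩, fun _ => hβ.symm⟩
    by_cases hnamed : IsNamed w (B x)
    · obtain ⟨t, ht⟩ := hnamed
      exact ⟨some t, ⟨fun _ => rfl, fun s hs => Option.some.inj hs ▸ ht⟩, fun hx' => (hx hx').elim⟩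
    · exact ⟨none, ⟨fun hn => (hnamed hn).elim, fun _ ht => nomatch ht⟩, fun hx' => (hx hx').elim⟩
  choose β' hassoc heq using hpointwise
  exact ⟨β', hassoc, Formula.subst_congr heq⟩

theorem sat_box_iff_of_closed {φ : Formula S} (hφ : φ.closed) :
    Sat X w M (.box φ) B ↔ φ ∈ M := by
  obtain ⟨β, hβ, -⟩ : ∃ β, Assoc w B β ∧ φ.subst β = φ.subst fun _ => none :=
    NamesFreeVars.exists_assoc fun x hx => (hφ x hx).elim
  cases X
  · simp only [Sat, hφ.subst_eq_self, hφ, true_and]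
    exact ⟨fun ⟨_, _, hmem⟩ => hmem, fun hmem => ⟨β, hβ, hmem⟩⟩
  · simp only [Sat, hφ.subst_eq_self, hφ, true_and]
    exact ⟨fun hall => hall β hβ, fun hmem _ _ => hmem⟩

theorem NamesFreeVars.subst_mem_of_sat_box_all {φ : Formula S} (h : NamesFreeVars w B β φ)
    (hsat : Sat .all w M (.box φ) B) : φ.subst β ∈ M := by
  obtain ⟨β', hβ', heq⟩ := h.exists_assoc
  exact heq ▸ (hsat β' hβ').2

theorem NamesFreeVars.sat_box_iff {a : PAtom S} (h : NamesFreeVars w B β a.toFormula)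
    (hinv : NameInvariant w M) :
    Sat X w M (.box a.toFormula) B ↔ a.toFormula.subst β ∈ M := by
  have htransfer : ∀ {β₁ β₂}, NamesFreeVars w B β₁ a.toFormula →
      NamesFreeVars w B β₂ a.toFormula → a.toFormula.subst β₁ ∈ M → a.toFormula.subst β₂ ∈ M :=
    fun h₁ h₂ => hinv a.p _ _ h₁.isGround_subst h₂.isGround_subst
      fun i => (h₁.evalG_subst i).trans (h₂.evalG_subst i).symm
  cases X
  · constructor
    · rintro ⟨β', hβ', -, hmem⟩
      exact htransfer (h.of_assoc hβ') h hmem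
    · intro hmem
      obtain ⟨β', hβ', heq⟩ := h.exists_assoc
      exact ⟨β', hβ', (h.of_assoc hβ').closed_subst, heq ▸ hmem⟩
  · exact ⟨h.subst_mem_of_sat_box_all, fun hmem β' hβ' =>
      ⟨(h.of_assoc hβ').closed_subst, htransfer h (h.of_assoc hβ') hmem⟩⟩

theorem NamesFreeVars.sat_iff_modelsF_subst {a : PAtom S}
    (h : NamesFreeVars w B β a.toFormula) :
    Sat X w M a.toFormula B ↔ ModelsF X w M (a.toFormula.subst β) := by
  have heval : ∀ B' : ℕ → w.U, (fun i => ((a.args i).subst β).eval w B') =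
      fun i => (a.args i).eval w B := fun B' => funext fun i =>
    (Term.eval_eq_evalG (h.isGround_subst i) w B').trans (h.evalG_subst i)
  simp only [ModelsF, PAtom.toFormula, Formula.subst, Sat, heval]
  exact ⟨fun hsat _ => hsat, fun hall => hall B⟩

end Names

/-! ### Rule embeddings -/

section Connectives

variable {X : Sem} {w : Interp S} {Γ : Set (Formula S)} {B : ℕ → w.U}

theorem sat_imp {φ ψ : Formula S} :
    Sat X w Γ (.imp φ ψ) B ↔ (Sat X w Γ φ B → Sat X w Γ ψ B) := by
  simp only [Formula.imp, Sat, not_and, not_not]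

theorem sat_andAll {φ : Formula S} {l : List (Formula S)} :
    Sat X w Γ (andAll φ l) B ↔ ∀ ψ ∈ φ :: l, Sat X w Γ ψ B := by
  induction l generalizing φ with
  | nil => simp only [andAll, List.mem_singleton, forall_eq]
  | cons ψ l ih => simp only [andAll, ih, List.forall_mem_cons, Sat, and_assoc]

theorem sat_orAll {φ : Formula S} {l : List (Formula S)} :
    Sat X w Γ (orAll φ l) B ↔ ∃ ψ ∈ φ :: l, Sat X w Γ ψ B := by
  induction l generalizing φ with
  | nil => simp only [orAll, List.mem_singleton, exists_eq_left]
  | cons ψ l ih =>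
    simp only [orAll, ih, List.exists_mem_cons_iff, Formula.or, Sat, not_and_or, not_not,
      or_assoc]

theorem sat_impOf {l : List (Formula S)} {φ : Formula S} :
    Sat X w Γ (impOf l φ) B ↔ ((∀ ψ ∈ l, Sat X w Γ ψ B) → Sat X w Γ φ B) := by
  cases l with
  | nil => simp only [impOf, List.not_mem_nil, IsEmpty.forall_iff, implies_true, forall_const]
  | cons ψ l => rw [impOf, sat_imp, sat_andAll]

theorem sat_disjOf {l : List (Formula S)} (hl : l ≠ []) :
    Sat X w Γ (disjOf l) B ↔ ∃ ψ ∈ l, Sat X w Γ ψ B := by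
  cases l with
  | nil => exact (hl rfl).elim
  | cons ψ l => exact sat_orAll

theorem modelsF_uclosure {vs : List ℕ} {φ : Formula S} :
    ModelsF X w Γ (uclosure vs φ) ↔ ModelsF X w Γ φ := by
  induction vs with
  | nil => rfl
  | cons x vs ih =>
    rw [← ih]
    simp only [uclosure, List.foldr_cons, ModelsF, Formula.all, Sat, not_exists, not_not]
    exact ⟨fun h B => by simpa only [Function.update_eq_self] using h B (B x), fun h B u => h _⟩

end Connectives

section BoxAtomic

theorem boxAtomic_uclosure {vs : List ℕ} {φ : Formula S} (h : φ.boxAtomic) :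
    (uclosure vs φ).boxAtomic := by
  induction vs with
  | nil => exact h
  | cons _ _ ih => exact ih

theorem boxAtomic_andAll {φ : Formula S} {l : List (Formula S)}
    (h : ∀ ψ ∈ φ :: l, ψ.boxAtomic) : (andAll φ l).boxAtomic := by
  induction l generalizing φ with
  | nil => exact h φ (List.mem_singleton_self φ)
  | cons ψ l ih =>
    simp only [List.forall_mem_cons] at h
    exact ih (List.forall_mem_cons.2 ⟨⟨h.1, h.2.1⟩, h.2.2⟩)

theorem boxAtomic_orAll {φ : Formula S} {l : List (Formula S)}
    (h : ∀ ψ ∈ φ :: l, ψ.boxAtomic) : (orAll φ l).boxAtomic := by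
  induction l generalizing φ with
  | nil => exact h φ (List.mem_singleton_self φ)
  | cons ψ l ih =>
    simp only [List.forall_mem_cons] at h
    exact ih (List.forall_mem_cons.2 ⟨⟨h.1, h.2.1⟩, h.2.2⟩)

theorem boxAtomic_impOf {l : List (Formula S)} {φ : Formula S} (hφ : φ.boxAtomic)
    (hl : ∀ ψ ∈ l, ψ.boxAtomic) : (impOf l φ).boxAtomic := by
  cases l with
  | nil => exact hφ
  | cons ψ l => exact ⟨boxAtomic_andAll hl, hφ⟩

theorem boxAtomic_disjOf {l : List (Formula S)} (h : ∀ ψ ∈ l, ψ.boxAtomic) :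
    (disjOf l).boxAtomic := by
  cases l with
  | nil => trivial
  | cons ψ l => exact boxAtomic_orAll h

theorem boxAtomic_of_mem_bodyHP {r : Rule S} : ∀ ψ ∈ bodyHP r, ψ.boxAtomic := by
  simp only [bodyHP, List.forall_mem_append, List.forall_mem_map]
  exact ⟨fun _ _ => trivial, fun _ _ => trivial⟩

theorem boxAtomic_of_mem_bodyE {r : Rule S} : ∀ ψ ∈ bodyE r, ψ.boxAtomic := by
  simp only [bodyE, List.forall_mem_append, List.forall_mem_map]
  exact ⟨fun _ _ => ⟨trivial, trivial⟩, fun _ _ => trivial⟩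

theorem boxAtomic_embHP (r : Rule S) : (embHP r).boxAtomic :=
  boxAtomic_uclosure <| boxAtomic_impOf
    (boxAtomic_disjOf (List.forall_mem_map.2 fun _ _ => trivial)) boxAtomic_of_mem_bodyHP

theorem boxAtomic_embEB (r : Rule S) : (embEB r).boxAtomic :=
  boxAtomic_uclosure <| boxAtomic_impOf
    (boxAtomic_disjOf (List.forall_mem_map.2 fun _ _ => trivial)) boxAtomic_of_mem_bodyE

theorem boxAtomic_embEH (r : Rule S) : (embEH r).boxAtomic :=
  boxAtomic_uclosure <| boxAtomic_impOf
    (boxAtomic_disjOf (List.forall_mem_map.2 fun _ _ => ⟨trivial, trivial⟩))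
    boxAtomic_of_mem_bodyE

theorem boxAtomic_of_mem_UNAax {P : Program S} {φ : Formula S} (h : φ ∈ UNAax P) :
    φ.boxAtomic := by
  obtain ⟨t₁, t₂, -, -, -, rfl⟩ := h
  exact ⟨trivial, trivial⟩

end BoxAtomic

section RuleEmbeddings

variable {X : Sem} {w : Interp S} {Γ : Set (Formula S)} {r : Rule S}

theorem modelsF_embHP_iff (hr : r.head ≠ []) :
    ModelsF X w Γ (embHP r) ↔ ∀ B : ℕ → w.U, (∀ b ∈ r.pos, Sat X w Γ b.toFormula B) →
      (∀ c ∈ r.neg, ¬ Sat X w Γ (.box c.toFormula) B) → ∃ h ∈ r.head, Sat X w Γ h.toFormula B := by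
  rw [embHP, modelsF_uclosure]
  refine forall_congr' fun B => ?_
  rw [sat_impOf, sat_disjOf (List.map_eq_nil_iff.not.2 hr), bodyHP, List.forall_mem_append,
    List.forall_mem_map, List.forall_mem_map, and_imp]
  simp only [List.mem_map, exists_exists_and_eq_and]
  rfl

theorem modelsF_embEB_iff (hr : r.head ≠ []) :
    ModelsF X w Γ (embEB r) ↔ ∀ B : ℕ → w.U,
      (∀ b ∈ r.pos, Sat X w Γ b.toFormula B ∧ Sat X w Γ (.box b.toFormula) B) →
      (∀ c ∈ r.neg, ¬ Sat X w Γ (.box c.toFormula) B) → ∃ h ∈ r.head, Sat X w Γ h.toFormula B := by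
  rw [embEB, modelsF_uclosure]
  refine forall_congr' fun B => ?_
  rw [sat_impOf, sat_disjOf (List.map_eq_nil_iff.not.2 hr), bodyE, List.forall_mem_append,
    List.forall_mem_map, List.forall_mem_map, and_imp]
  simp only [List.mem_map, exists_exists_and_eq_and]
  rfl

theorem modelsF_embEH_iff (hr : r.head ≠ []) :
    ModelsF X w Γ (embEH r) ↔ ∀ B : ℕ → w.U,
      (∀ b ∈ r.pos, Sat X w Γ b.toFormula B ∧ Sat X w Γ (.box b.toFormula) B) →
      (∀ c ∈ r.neg, ¬ Sat X w Γ (.box c.toFormula) B) →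
      ∃ h ∈ r.head, Sat X w Γ h.toFormula B ∧ Sat X w Γ (.box h.toFormula) B := by
  rw [embEH, modelsF_uclosure]
  refine forall_congr' fun B => ?_
  rw [sat_impOf, sat_disjOf (List.map_eq_nil_iff.not.2 hr), bodyE, List.forall_mem_append,
    List.forall_mem_map, List.forall_mem_map, and_imp]
  simp only [List.mem_map, exists_exists_and_eq_and]
  rfl

theorem modelsF_embEB_of_embHP (hr : r.head ≠ []) (h : ModelsF X w Γ (embHP r)) :
    ModelsF X w Γ (embEB r) :=
  (modelsF_embEB_iff hr).2 fun B hpos hneg =>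
    (modelsF_embHP_iff hr).1 h B (fun b hb => (hpos b hb).1) hneg

theorem modelsF_embEB_of_embEH (hr : r.head ≠ []) (h : ModelsF X w Γ (embEH r)) :
    ModelsF X w Γ (embEB r) :=
  (modelsF_embEB_iff hr).2 fun B hpos hneg =>
    let ⟨a, ha, hsat, _⟩ := (modelsF_embEH_iff hr).1 h B hpos hneg
    ⟨a, ha, hsat⟩

theorem modelsF_embEH_of_embHP (hr : r.head ≠ [])
    (hintro : ∀ a ∈ r.head, ∀ B : ℕ → w.U,
      Sat X w Γ a.toFormula B → Sat X w Γ (.box a.toFormula) B)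
    (h : ModelsF X w Γ (embHP r)) : ModelsF X w Γ (embEH r) :=
  (modelsF_embEH_iff hr).2 fun B hpos hneg =>
    let ⟨a, ha, hsat⟩ := (modelsF_embHP_iff hr).1 h B (fun b hb => (hpos b hb).1) hneg
    ⟨a, ha, hsat, hintro a ha B hsat⟩

end RuleEmbeddings

/-! ### Models of an embedding satisfy the reduct -/

section Reduct

variable {P : Program S} {M : Set (Formula S)}

theorem forall_mem_reduct_iff {Body Head : PAtom S → Prop} :
    (∀ r ∈ reduct P M, (∀ b ∈ r.pos, Body b) → ∃ h ∈ r.head, Head h) ↔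
      ∀ r ∈ P, ∀ σ : ℕ → Term S, (∀ x, r.hasVar x → (σ x).isNameOf (progFuncs P)) →
        (∀ b ∈ r.pos, Body (b.substA σ)) → (∀ c ∈ r.neg, (c.substA σ).toFormula ∉ M) →
        ∃ h ∈ r.head, Head (h.substA σ) := by
  constructor
  · intro H r hr σ hσ hpos hneg
    obtain ⟨_, hmem, hHead⟩ :=
      H ⟨_, _, [], []⟩ ⟨r.applySubst σ, ⟨r, hr, σ, hσ, rfl⟩, List.forall_mem_map.2 hneg, rfl⟩
        (List.forall_mem_map.2 hpos)
    obtain ⟨a, ha, rfl⟩ := List.mem_map.1 hmem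
    exact ⟨a, ha, hHead⟩
  · rintro H _ ⟨_, ⟨r, hr, σ, hσ, rfl⟩, hneg, rfl⟩ hpos
    obtain ⟨a, ha, hHead⟩ :=
      H r hr σ hσ (List.forall_mem_map.1 hpos) fun _ hc => hneg _ (List.mem_map_of_mem hc)
    exact ⟨_, List.mem_map_of_mem ha, hHead⟩

theorem Rule.pos_subset_atoms {r : Rule S} : r.pos ⊆ r.atoms := fun _ h => by simp [atoms, h]

theorem Rule.neg_subset_atoms {r : Rule S} : r.neg ⊆ r.atoms := fun _ h => by simp [atoms, h]

theorem Rule.head_subset_atoms {r : Rule S} : r.head ⊆ r.atoms := fun _ h => by simp [atoms, h]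

theorem namesFreeVars_evalG (w : Interp S) {r : Rule S} {σ : ℕ → Term S}
    (hσ : ∀ x, r.hasVar x → (σ x).isNameOf (progFuncs P)) {a : PAtom S} (ha : a ∈ r.atoms) :
    NamesFreeVars w (fun x => (σ x).evalG w) (fun x => some (σ x)) a.toFormula :=
  fun x hx => ⟨σ x, rfl, Term.isGround_of_isNameOf (hσ x ⟨a, ha, hx⟩), rfl⟩

theorem reduct_sound_of_embHP_all (hwf : progWf P) {w : Interp S}
    (hw : ∀ r ∈ P, ModelsF .all w M (embHP r)) :
    ∀ r ∈ reduct P M, (∀ b ∈ r.pos, ModelsF .all w M b.toFormula) →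
      ∃ h ∈ r.head, ModelsF .all w M h.toFormula := by
  rw [forall_mem_reduct_iff]
  intro r hr σ hσ hpos hneg
  have hnames {a : PAtom S} := namesFreeVars_evalG w hσ (a := a)
  obtain ⟨h, hh, hsat⟩ := (modelsF_embHP_iff (hwf r hr).1).1 (hw r hr) (fun x => (σ x).evalG w)
    (fun b hb => (hnames (Rule.pos_subset_atoms hb)).sat_iff_modelsF_subst.2 (hpos b hb))
    (fun c hc hbox =>
      hneg c hc ((hnames (Rule.neg_subset_atoms hc)).subst_mem_of_sat_box_all hbox))
  exact ⟨h, hh, (hnames (Rule.head_subset_atoms hh)).sat_iff_modelsF_subst.1 hsat⟩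

theorem reduct_sound_of_embEB (hwf : progWf P) {X : Sem} {w : Interp S}
    (hinv : NameInvariant w M) (hw : ∀ r ∈ P, ModelsF X w M (embEB r)) :
    ∀ r ∈ reduct P M, (∀ b ∈ r.pos, b.toFormula ∈ M ∧ ModelsF X w M b.toFormula) →
      ∃ h ∈ r.head, ModelsF X w M h.toFormula := by
  rw [forall_mem_reduct_iff]
  intro r hr σ hσ hpos hneg
  have hnames {a : PAtom S} := namesFreeVars_evalG w hσ (a := a)
  obtain ⟨h, hh, hsat⟩ := (modelsF_embEB_iff (hwf r hr).1).1 (hw r hr) (fun x => (σ x).evalG w)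
    (fun b hb => ⟨(hnames (Rule.pos_subset_atoms hb)).sat_iff_modelsF_subst.2 (hpos b hb).2,
      ((hnames (Rule.pos_subset_atoms hb)).sat_box_iff hinv).2 (hpos b hb).1⟩)
    (fun c hc hbox =>
      hneg c hc (((hnames (Rule.neg_subset_atoms hc)).sat_box_iff hinv).1 hbox))
  exact ⟨h, hh, (hnames (Rule.head_subset_atoms hh)).sat_iff_modelsF_subst.1 hsat⟩

end Reduct

/-! ### Unique names -/

/-- The equality atoms in `M` behave like equality with respect to the predicate atoms in `M`;
with the unique-names axioms this makes `M` name invariant. -/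
structure RespectsEq (M : Set (Formula S)) : Prop where
  refl : ∀ t : Term S, t.isGround → Formula.eq t t ∈ M
  congr : ∀ (p : S.Pred) (ts ts' : Fin (S.arP p) → Term S), (∀ i, (ts i).isGround) →
    (∀ i, (ts' i).isGround) → (∀ i, Formula.eq (ts i) (ts' i) ∈ M) →
    Formula.atom p ts ∈ M → Formula.atom p ts' ∈ M

section UniqueNames

variable {X : Sem} {P : Program S} {w : Interp S} {M : Set (Formula S)}

theorem RespectsEq.eq_mem_of_modelsT_UNAax (hfull : fullSig P) (hM : RespectsEq M)
    (hw : ModelsT X w M (UNAax P)) {t₁ t₂ : Term S} (h₁ : t₁.isGround) (h₂ : t₂.isGround)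
    (heq : t₁.evalG w = t₂.evalG w) : Formula.eq t₁ t₂ ∈ M := by
  rcases eq_or_ne t₁ t₂ with rfl | hne
  · exact hM.refl t₁ h₁
  have hname {t : Term S} (ht : t.isGround) : t.isNameOf (progFuncs P) :=
    (Term.isNameOf_iff_isGround hfull.1).2 ht
  have hclosed : (Formula.eq t₁ t₂).closed :=
    (Formula.isAtomic.isGround_iff_closed (φ := .eq t₁ t₂) trivial).1 ⟨h₁, h₂⟩
  have hax := sat_imp.1 (hw _ ⟨t₁, t₂, hname h₁, hname h₂, hne, rfl⟩ fun _ => w.dflt)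
  by_contra hmem
  exact hax (fun hbox => hmem ((sat_box_iff_of_closed hclosed).1 hbox)) heq

theorem RespectsEq.nameInvariant (hfull : fullSig P) (hM : RespectsEq M)
    (hw : ModelsT X w M (UNAax P)) : NameInvariant w M :=
  fun p ts ts' hts hts' heq => hM.congr p ts ts' hts hts' fun i =>
    hM.eq_mem_of_modelsT_UNAax hfull hw (hts i) (hts' i) (heq i)

end UniqueNames

/-! ### Term interpretations -/

/-- The interpretation by names in which exactly the ground atoms in `N` are true. If there are
no names at all, arbitrary terms serve as individuals, so that the universe is never empty. -/
def termInterp (N : Set (Formula S)) : Interp S where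
  U := {t : Term S // (∃ s : Term S, s.isGround) → t.isGround}
  nonempty := by
    by_cases h : ∃ s : Term S, s.isGround
    · exact ⟨⟨h.choose, fun _ => h.choose_spec⟩⟩
    · exact ⟨⟨.var 0, fun hs => (h hs).elim⟩⟩
  interpF f ts := ⟨.func f fun i => (ts i).1, fun hs i => (ts i).2 hs⟩
  interpP p ts := .atom p (fun i => (ts i).1) ∈ N

section TermInterp

variable {X : Sem} {P : Program S} {M N Γ : Set (Formula S)}

theorem eval_termInterp {t : Term S} (ht : t.isGround) (B : ℕ → (termInterp N).U) :
    (t.eval (termInterp N) B).1 = t := by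
  induction t with
  | var x => exact ht.elim
  | func f ts ih => exact congrArg (Term.func f) (funext fun i => ih i (ht i))

theorem evalG_termInterp_injOn {t₁ t₂ : Term S} (h₁ : t₁.isGround) (h₂ : t₂.isGround)
    (heq : t₁.evalG (termInterp N) = t₂.evalG (termInterp N)) : t₁ = t₂ := by
  rw [← eval_termInterp h₁, ← eval_termInterp h₂]
  exact congrArg Subtype.val heq

theorem nameInvariant_termInterp : NameInvariant (termInterp N) M := by
  intro p ts ts' hts hts' heq hmem
  obtain rfl : ts = ts' := funext fun i => evalG_termInterp_injOn (hts i) (hts' i) (heq i)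
  exact hmem

theorem modelsF_atom_termInterp_iff {a : PAtom S} (ha : a.isGround) :
    ModelsF X (termInterp N) Γ a.toFormula ↔ a.toFormula ∈ N := by
  have hargs : ∀ B, (fun i => ((a.args i).eval (termInterp N) B).1) = a.args :=
    fun B => funext fun i => eval_termInterp (ha i) B
  have hsat : ∀ B, Sat X (termInterp N) Γ a.toFormula B ↔ a.toFormula ∈ N := fun B =>
    iff_of_eq (congrArg (Formula.atom a.p · ∈ N) (hargs B))
  exact ⟨fun h => (hsat _).1 (h fun _ => (termInterp N).dflt), fun h B => (hsat B).2 h⟩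

theorem mem_of_modelsF_termInterp (hrefl : ∀ t : Term S, t.isGround → Formula.eq t t ∈ N)
    {φ : Formula S} (hat : φ.isAtomic) (hgr : φ.isGround)
    (h : ModelsF X (termInterp N) Γ φ) : φ ∈ N := by
  cases φ with
  | atom p ts => exact (modelsF_atom_termInterp_iff (a := ⟨p, ts⟩) hgr).1 h
  | eq t₁ t₂ => exact evalG_termInterp_injOn hgr.1 hgr.2 (h _) ▸ hrefl t₁ hgr.1
  | _ => exact hat.elim

theorem modelsT_UNAax_termInterp : ModelsT X (termInterp N) M (UNAax P) := by
  rintro _ ⟨t₁, t₂, h₁, h₂, hne, rfl⟩ B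
  replace h₁ := Term.isGround_of_isNameOf h₁
  replace h₂ := Term.isGround_of_isNameOf h₂
  refine sat_imp.2 fun _ heq => hne (evalG_termInterp_injOn (N := N) h₁ h₂ ?_)
  rw [← Term.eval_eq_evalG h₁ _ B, ← Term.eval_eq_evalG h₂ _ B]
  exact heq

theorem exists_isGround_of_hasVar (hfull : fullSig P) (hgood : goodSig P) {a : PAtom S} {x : ℕ}
    (hx : a.hasVar x) : ∃ t : Term S, t.isGround := by
  obtain ⟨i, -⟩ := hx
  obtain ⟨f, -, hf⟩ := hgood ⟨a.p, hfull.2 a.p, i.pos⟩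
  exact ⟨.func f fun _ => .var 0, fun j => absurd j.pos (by omega)⟩

theorem namesFreeVars_termInterp (hfull : fullSig P) (hgood : goodSig P) (a : PAtom S)
    (B : ℕ → (termInterp N).U) :
    NamesFreeVars (termInterp N) B (fun x => some (B x).1) a.toFormula := by
  intro x hx
  have hground := (B x).2 (exists_isGround_of_hasVar hfull hgood hx)
  exact ⟨(B x).1, rfl, hground, Subtype.ext (eval_termInterp hground _)⟩

theorem sat_atom_termInterp_iff (hfull : fullSig P) (hgood : goodSig P) {a : PAtom S}
    {B : ℕ → (termInterp N).U} :
    Sat X (termInterp N) Γ a.toFormula B ↔ (a.substA fun x => (B x).1).toFormula ∈ N :=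
  have hnames := namesFreeVars_termInterp hfull hgood a B
  hnames.sat_iff_modelsF_subst.trans
    (modelsF_atom_termInterp_iff (a := a.substA _) hnames.isGround_subst)

theorem sat_box_termInterp_iff (hfull : fullSig P) (hgood : goodSig P) {a : PAtom S}
    {B : ℕ → (termInterp N).U} :
    Sat X (termInterp N) M (.box a.toFormula) B ↔ (a.substA fun x => (B x).1).toFormula ∈ M :=
  (namesFreeVars_termInterp hfull hgood a B).sat_box_iff nameInvariant_termInterp

theorem modelsF_embHP_termInterp (hwf : progWf P) (hfull : fullSig P) (hgood : goodSig P)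
    (hN : HerbrandModelOf P (reduct P M) N) {r : Rule S} (hr : r ∈ P) :
    ModelsF X (termInterp N) M (embHP r) := by
  rw [modelsF_embHP_iff (hwf r hr).1]
  simp only [sat_atom_termInterp_iff hfull hgood, sat_box_termInterp_iff hfull hgood]
  intro B
  refine forall_mem_reduct_iff.1 hN.2.1 r hr (fun x => (B x).1) fun x ⟨a, _, hx⟩ => ?_
  exact (Term.isNameOf_iff_isGround hfull.1).2
    ((B x).2 (exists_isGround_of_hasVar hfull hgood hx))

theorem modelsF_embEH_termInterp (hwf : progWf P) (hfull : fullSig P) (hgood : goodSig P)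
    (hNM : N ⊆ M) (hN : HerbrandModelOf P (reduct P M) N) {r : Rule S} (hr : r ∈ P) :
    ModelsF X (termInterp N) M (embEH r) := by
  refine modelsF_embEH_of_embHP (hwf r hr).1 (fun a _ B hsat => ?_)
    (modelsF_embHP_termInterp hwf hfull hgood hN hr)
  exact (sat_box_termInterp_iff hfull hgood).2
    (hNM ((sat_atom_termInterp_iff hfull hgood).1 hsat))

end TermInterp

/-! ### Faithful embeddings -/

/-- The semantic properties of a theory `Φ` which ensure that its stableˣ expansions capture the
stable models of the normal program `P`. The rules of the reduct need to be reflected only up to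
membership of their positive bodies in `M`, since `τ_EB` and `τ_EH` guard those by `𝖫`. -/
structure IsFaithfulEmbedding (X : Sem) (P : Program S) (Φ : Set (Formula S)) : Prop where
  boxAtomic : ∀ φ ∈ Φ, φ.boxAtomic
  reduct_sound : ∀ {M w}, RespectsEq M → ModelsT X w M Φ →
    ∀ r ∈ reduct P M, (∀ b ∈ r.pos, b.toFormula ∈ M ∧ ModelsF X w M b.toFormula) →
      ∃ h ∈ r.head, ModelsF X w M h.toFormula
  modelsT_termInterp : ∀ {M N}, N ⊆ M → HerbrandModelOf P (reduct P M) N →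
    ModelsT X (termInterp N) M Φ

section Faithful

variable {X : Sem} {P : Program S} {Φ M : Set (Formula S)}

theorem exists_head_eq_singleton_of_mem_reduct (hnormal : progNormal P) {r : Rule S}
    (hr : r ∈ reduct P M) : ∃ h, r.head = [h] := by
  obtain ⟨_, ⟨r, hr, σ, -, rfl⟩, -, rfl⟩ := hr
  obtain ⟨h, hh⟩ := List.length_eq_one_iff.1 (hnormal r hr)
  exact ⟨h.substA σ, by simp only [Rule.applySubst, hh, List.map_cons, List.map_nil]⟩

theorem isStableModel.induction (hnormal : progNormal P) (hM : isStableModel P M)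
    {Q : Formula S → Prop}
    (rule : ∀ r ∈ reduct P M, (∀ b ∈ r.pos, b.toFormula ∈ M ∧ Q b.toFormula) →
      ∃ h ∈ r.head, Q h.toFormula)
    (refl : ∀ t : Term S, t.isNameOf (progFuncs P) → Q (.eq t t)) : ∀ φ ∈ M, Q φ := by
  have hmodel : HerbrandModelOf P (reduct P M) {φ ∈ M | Q φ} := by
    refine ⟨fun φ hφ => hM.1.1 φ hφ.1, fun r hr hpos => ?_,
      fun t ht => ⟨hM.1.2.2 t ht, refl t ht⟩⟩
    have hhead := hM.1.2.1 r hr fun b hb => (hpos b hb).1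
    have hQ := rule r hr hpos
    obtain ⟨h, hh⟩ := exists_head_eq_singleton_of_mem_reduct hnormal hr
    simp only [hh, List.mem_singleton, exists_eq_left] at hhead hQ ⊢
    exact ⟨hhead, hQ⟩
  intro φ hφ
  rw [← hM.2 _ (Set.sep_subset M Q) hmodel] at hφ
  exact hφ.2

theorem isStableModel.eq_of_eq_mem (hnormal : progNormal P) (hM : isStableModel P M)
    {t₁ t₂ : Term S} (h : Formula.eq t₁ t₂ ∈ M) : t₁ = t₂ := by
  refine hM.induction hnormal (Q := fun φ => ∀ s t, φ = .eq s t → s = t)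
    (fun r hr hpos => ?_) (fun t _ s s' heq => ?_) _ h _ _ rfl
  · obtain ⟨a, ha, -⟩ := hM.1.2.1 r hr fun b hb => (hpos b hb).1
    exact ⟨a, ha, fun _ _ heq => nomatch heq⟩
  · cases heq
    rfl

theorem HerbrandModelOf.eq_refl_mem (hfull : fullSig P) {Q : Program S}
    (hM : HerbrandModelOf P Q M) (t : Term S) (ht : t.isGround) : Formula.eq t t ∈ M :=
  hM.2.2 t ((Term.isNameOf_iff_isGround hfull.1).2 ht)

theorem isStableModel.respectsEq (hnormal : progNormal P) (hfull : fullSig P)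
    (hM : isStableModel P M) : RespectsEq M where
  refl := hM.1.eq_refl_mem hfull
  congr p ts ts' _ _ heq hmem := by
    obtain rfl : ts = ts' := funext fun i => hM.eq_of_eq_mem hnormal (heq i)
    exact hmem

theorem IsAtomicExpansion.respectsEq (hM : IsAtomicExpansion X Φ M) : RespectsEq M where
  refl t ht := (hM.mem_iff (φ := .eq t t) trivial ⟨ht, ht⟩).2 fun _ _ _ => rfl
  congr p ts ts' hts hts' heq hmem := by
    refine (hM.mem_iff (φ := .atom p ts') trivial hts').2 fun w hw B => ?_
    have hargs : (fun i => (ts i).eval w B) = fun i => (ts' i).eval w B := funext fun i =>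
      (hM.mem_iff (φ := .eq (ts i) (ts' i)) trivial ⟨hts i, hts' i⟩).1 (heq i) w hw B
    have hsat : w.interpP p fun i => (ts i).eval w B :=
      (hM.mem_iff (φ := .atom p ts) trivial hts).1 hmem w hw B
    exact (congrArg (w.interpP p) hargs).mp hsat

theorem IsFaithfulEmbedding.isAtomicExpansion (hΦ : IsFaithfulEmbedding X P Φ)
    (hnormal : progNormal P) (hfull : fullSig P) (hM : isStableModel P M) :
    IsAtomicExpansion X Φ M := by
  have hterm : ModelsT X (termInterp M) M Φ := hΦ.modelsT_termInterp subset_rfl hM.1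
  refine ⟨⟨_, hterm⟩, Set.Subset.antisymm (fun φ hφ => ?_) ?_⟩
  · refine ⟨(hM.1.1 φ hφ).1, (hM.1.1 φ hφ).2, fun w hw => ?_⟩
    exact hM.induction hnormal (Q := ModelsF X w M)
      (hΦ.reduct_sound (hM.respectsEq hnormal hfull) hw) (fun _ _ _ => rfl) φ hφ
  · rintro φ ⟨hat, hgr, hφ⟩
    exact mem_of_modelsF_termInterp (hM.1.eq_refl_mem hfull) hat hgr (hφ _ hterm)

theorem isGround_of_mem_head_reduct {r : Rule S} (hr : r ∈ reduct P M) {a : PAtom S}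
    (ha : a ∈ r.head) : a.isGround := by
  obtain ⟨_, ⟨r, -, σ, hσ, rfl⟩, -, rfl⟩ := hr
  obtain ⟨a', ha', rfl⟩ := List.mem_map.1 ha
  exact fun i => Term.isGround_subst fun x hx =>
    ⟨σ x, rfl, Term.isGround_of_isNameOf (hσ x ⟨a', Rule.head_subset_atoms ha', i, hx⟩)⟩

theorem IsFaithfulEmbedding.isStableModel (hΦ : IsFaithfulEmbedding X P Φ)
    (hnormal : progNormal P) (hfull : fullSig P) (hM : IsAtomicExpansion X Φ M) :
    isStableModel P M := by
  have hherb : HerbrandI M := fun φ hφ => by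
    obtain ⟨hat, hgr, -⟩ := hM.2 ▸ hφ
    exact ⟨hat, hgr⟩
  have hentails : ∀ φ ∈ M, Entails X Φ M φ := fun φ hφ =>
    (hM.mem_iff (hherb φ hφ).1 (hherb φ hφ).2).1 hφ
  refine ⟨⟨hherb, fun r hr hpos => ?_,
    fun t ht => hM.respectsEq.refl t (Term.isGround_of_isNameOf ht)⟩, fun N hNM hN => ?_⟩
  · obtain ⟨h, hh⟩ := exists_head_eq_singleton_of_mem_reduct hnormal hr
    have hgr : h.isGround := isGround_of_mem_head_reduct hr (hh ▸ List.mem_singleton_self h)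
    refine ⟨h, hh ▸ List.mem_singleton_self h, ?_⟩
    refine (hM.mem_iff (φ := h.toFormula) trivial hgr).2 fun w hw => ?_
    have hsound := hΦ.reduct_sound hM.respectsEq hw r hr
      fun b hb => ⟨hpos b hb, hentails _ (hpos b hb) w hw⟩
    simpa only [hh, List.mem_singleton, exists_eq_left] using hsound
  · refine Set.Subset.antisymm hNM fun φ hφ => ?_
    exact mem_of_modelsF_termInterp (hN.eq_refl_mem hfull) (hherb φ hφ).1 (hherb φ hφ).2
      (hentails φ hφ _ (hΦ.modelsT_termInterp hNM hN))

theorem IsFaithfulEmbedding.isStableModel_iff (hΦ : IsFaithfulEmbedding X P Φ)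
    (hnormal : progNormal P) (hfull : fullSig P) :
    _root_.isStableModel P M ↔ ∃ T, StableExp X Φ T ∧ Consistent T ∧ M = ogaOf T := by
  rw [exists_stableExp_iff_isAtomicExpansion hΦ.boxAtomic]
  exact ⟨hΦ.isAtomicExpansion hnormal hfull, hΦ.isStableModel hnormal hfull⟩

theorem isFaithfulEmbedding_ruleEmb_union_UNAax (hwf : progWf P) (hfull : fullSig P)
    (hgood : goodSig P) {emb : Rule S → Formula S} (hbox : ∀ r ∈ P, (emb r).boxAtomic)
    (hlower : ∀ r ∈ P, ∀ {w M}, ModelsF X w M (emb r) → ModelsF X w M (embEB r))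
    (hupper : ∀ r ∈ P, ∀ {w M}, ModelsF X w M (embHP r) → ModelsF X w M (embEH r) →
      ModelsF X w M (emb r)) :
    IsFaithfulEmbedding X P (ruleEmb emb P ∪ UNAax P) where
  boxAtomic := by
    rintro _ (⟨r, hr, rfl⟩ | hφ)
    exacts [hbox r hr, boxAtomic_of_mem_UNAax hφ]
  reduct_sound hM hw :=
    reduct_sound_of_embEB hwf (hM.nameInvariant hfull fun φ hφ => hw φ (.inr hφ))
      fun r hr => hlower r hr (hw _ (.inl ⟨r, hr, rfl⟩))
  modelsT_termInterp := by
    rintro M N hNM hN φ (⟨r, hr, rfl⟩ | hφ)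
    · exact hupper r hr (modelsF_embHP_termInterp hwf hfull hgood hN hr)
        (modelsF_embEH_termInterp hwf hfull hgood hNM hN hr)
    · exact modelsT_UNAax_termInterp φ hφ

theorem isFaithfulEmbedding_tauHP (hwf : progWf P) (hfull : fullSig P) (hgood : goodSig P) :
    IsFaithfulEmbedding X P (tauHP P) :=
  isFaithfulEmbedding_ruleEmb_union_UNAax hwf hfull hgood (fun r _ => boxAtomic_embHP r)
    (fun r hr _ _ => modelsF_embEB_of_embHP (hwf r hr).1) (fun _ _ _ _ h _ => h)

theorem isFaithfulEmbedding_tauEB (hwf : progWf P) (hfull : fullSig P) (hgood : goodSig P) :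
    IsFaithfulEmbedding X P (tauEB P) :=
  isFaithfulEmbedding_ruleEmb_union_UNAax hwf hfull hgood (fun r _ => boxAtomic_embEB r)
    (fun _ _ _ _ h => h) (fun r hr _ _ h _ => modelsF_embEB_of_embHP (hwf r hr).1 h)

theorem isFaithfulEmbedding_tauEH (hwf : progWf P) (hfull : fullSig P) (hgood : goodSig P) :
    IsFaithfulEmbedding X P (tauEH P) :=
  isFaithfulEmbedding_ruleEmb_union_UNAax hwf hfull hgood (fun r _ => boxAtomic_embEH r)
    (fun r hr _ _ => modelsF_embEB_of_embEH (hwf r hr).1) (fun _ _ _ _ _ h => h)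

theorem isFaithfulEmbedding_tauHPminus (hwf : progWf P) (hfull : fullSig P)
    (hgood : goodSig P) : IsFaithfulEmbedding .all P (tauHPminus P) where
  boxAtomic := by
    rintro _ ⟨r, -, rfl⟩
    exact boxAtomic_embHP r
  reduct_sound _ hw r hr hpos :=
    reduct_sound_of_embHP_all hwf (fun r hr => hw _ ⟨r, hr, rfl⟩) r hr
      fun b hb => (hpos b hb).2
  modelsT_termInterp := by
    rintro M N - hN _ ⟨r, hr, rfl⟩
    exact modelsF_embHP_termInterp hwf hfull hgood hN hr

end Faithful

/-- Faithfulness for normal programs: A Herbrand interpretation `M`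
is a stable model of the normal program `P` iff there is a consistent stableˣ
expansion `T` of `τ_χ(P)` with `M = T_oga`; the same holds for `τ⁻_HP` and
stableᴬ expansions. -/
theorem stmt3 {S : Sig} (X : Sem) (P : Program S)
    (hwf : progWf P) (hnormal : progNormal P) (hfull : fullSig P) (hgood : goodSig P)
    (τ : Program S → Set (Formula S))
    (hτ : τ = tauHP ∨ τ = tauEB ∨ τ = tauEH)
    (M : Set (Formula S)) (hM : HerbrandI M) :
    (isStableModel P M ↔
      ∃ T, StableExp X (τ P) T ∧ Consistent T ∧ M = ogaOf T) ∧
    (isStableModel P M ↔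
      ∃ T, StableExp Sem.all (tauHPminus P) T ∧ Consistent T ∧ M = ogaOf T) := by
  refine ⟨?_, (isFaithfulEmbedding_tauHPminus hwf hfull hgood).isStableModel_iff hnormal hfull⟩
  rcases hτ with rfl | rfl | rfl
  · exact (isFaithfulEmbedding_tauHP hwf hfull hgood).isStableModel_iff hnormal hfull
  · exact (isFaithfulEmbedding_tauEB hwf hfull hgood).isStableModel_iff hnormal hfull
  · exact (isFaithfulEmbedding_tauEH hwf hfull hgood).isStableModel_iff hnormal hfull
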